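/- Let f(z) = z + Σ_{n≥2} a_n z^n and g(z) = z + Σ_{n≥2} b_n z^n be analytic on the unit disk 𝔻, with f and g nonvanishing on the punctured disk 0 < |z| < 1, and suppose |a_n| ≤ (n+1)/2 and |b_n| ≤ 1 for all n ≥ 2. Then the function F(z) = z^3/(f(z)g(z)) satisfies |F'(z)(z/F(z))^2 − 1| < 1 for every z with 0 < |z| < (4 − √10)/3 ≈ 0.27924; in particular F belongs to the class 𝒰 in the disk |z| < (4 − √10)/3. -/

import Mathlib

/-!
Put `h(z) = f(z) g(z) / z² = ∑ cₙ zⁿ`, with `cₙ = ∑_{k+l=n} a_{k+1} b_{l+1}`, so that `F(z) = z / h(z)`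
and
`F'(z) (z / F(z))² - 1 = h(z) - z h'(z) - 1 = -∑_{n ≥ 1} (n - 1) cₙ zⁿ`.
The coefficient bounds give `|cₙ| ≤ ∑_{k ≤ n} (k + 2) / 2 = (n + 1)(n + 4) / 4` (`norm_cauchyCoeff_le`),
and the majorant `∑_{n ≥ 1} (n - 1)(n + 1)(n + 4) / 4 rⁿ` is evaluated (`hasSum_majorant`) by expanding
the polynomial in the binomials `(n + k).choose k`. With `r = |z|` it equals
`(3/2) / (1 - r)⁴ - 1 / (1 - r)³ - (3/2) / (1 - r)² + 1`, which is less than `1` exactly when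
`3 r² - 8 r + 2 > 0`; the smaller root of this quadratic is `(4 - √10) / 3`.
-/

lemma hasSum_of_eq {E : Type*} [AddCommMonoid E] [TopologicalSpace E] {u v : ℕ → E} {s t : E}
    (h : HasSum u s) (huv : ∀ n, v n = u n) (hst : t = s) : HasSum v t := by
  rwa [hst, funext huv]

lemma cast_choose_one (n : ℕ) : ((n + 1).choose 1 : ℝ) = n + 1 := by simp

lemma cast_choose_two (n : ℕ) : ((n + 2).choose 2 : ℝ) = (n + 2) * (n + 1) / 2 := by
  induction n with
  | zero => norm_num
  | succ n ih =>
    rw [show n + 1 + 2 = (n + 2) + 1 by ring, Nat.choose_succ_succ' (n + 2) 1]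
    push_cast [ih, Nat.choose_one_right]
    ring

lemma cast_choose_three (n : ℕ) :
    ((n + 3).choose 3 : ℝ) = (n + 3) * (n + 2) * (n + 1) / 6 := by
  induction n with
  | zero => norm_num
  | succ n ih =>
    rw [show n + 1 + 3 = (n + 3) + 1 by ring, Nat.choose_succ_succ' (n + 3) 2]
    have h2 := cast_choose_two (n + 1)
    rw [show n + 1 + 2 = n + 3 by ring] at h2
    push_cast [ih] at h2 ⊢
    rw [h2]
    ring

lemma summable_coeffBound {r : ℝ} (h0 : 0 ≤ r) (h1 : r < 1) :
    Summable (fun n : ℕ => ((n : ℝ) + 1) * (n + 4) / 4 * r ^ n) := by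
  have hr : ‖r‖ < 1 := by rwa [Real.norm_of_nonneg h0]
  have H2 := (hasSum_choose_mul_geometric_of_norm_lt_one 2 hr).summable
  have H1 := (hasSum_choose_mul_geometric_of_norm_lt_one 1 hr).summable
  refine ((H2.mul_left (1 / 2)).add (H1.mul_left (1 / 2))).congr fun n => ?_
  rw [cast_choose_two, cast_choose_one]
  ring

/-- The majorant of `h(z) - z h'(z) - 1`, where `r = |z|`; the summation index `n`
corresponds to the power `z ^ (n + 1)`. -/
lemma hasSum_majorant {r : ℝ} (h0 : 0 ≤ r) (h1 : r < 1) :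
    HasSum (fun n : ℕ => (n : ℝ) * ((n + 2) * (n + 5) / 4) * r ^ (n + 1))
      (3 / 2 * (1 / (1 - r) ^ 4) - 1 / (1 - r) ^ 3 - 3 / 2 * (1 / (1 - r) ^ 2) + 1) := by
  have hr : ‖r‖ < 1 := by rwa [Real.norm_of_nonneg h0]
  have H3 := hasSum_choose_mul_geometric_of_norm_lt_one 3 hr
  have H2 := hasSum_choose_mul_geometric_of_norm_lt_one 2 hr
  have H1 := hasSum_choose_mul_geometric_of_norm_lt_one 1 hr
  have H := ((H3.mul_left (3 / 2)).sub H2).sub (H1.mul_left (3 / 2))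
  -- Dropping the constant term, which is `-1`, accounts for the `+ 1` in the value.
  have H' := (hasSum_nat_add_iff' 1).2 H
  refine hasSum_of_eq H' (fun n => ?_) ?_
  · have e3 := cast_choose_three (n + 1)
    have e2 := cast_choose_two (n + 1)
    have e1 := cast_choose_one (n + 1)
    rw [e3, e2, e1]
    push_cast
    ring
  · simp

/-- The closed form of the majorant is below `1` inside the radius `(4 - √10) / 3`. -/
lemma majorant_lt_one {r : ℝ} (h : r < (4 - Real.sqrt 10) / 3) :
    3 / 2 * (1 / (1 - r) ^ 4) - 1 / (1 - r) ^ 3 - 3 / 2 * (1 / (1 - r) ^ 2) + 1 < 1 := by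
  have hs : Real.sqrt 10 ^ 2 = 10 := Real.sq_sqrt (by norm_num)
  have hs1 : 1 < Real.sqrt 10 := by
    rw [Real.lt_sqrt] <;> norm_num
  have hr : 0 < 1 - r := by linarith
  have key : 0 < 3 * r ^ 2 - 8 * r + 2 := by nlinarith
  have : 3 / 2 * (1 / (1 - r) ^ 4) - 1 / (1 - r) ^ 3 - 3 / 2 * (1 / (1 - r) ^ 2)
      = -(3 * r ^ 2 - 8 * r + 2) / (2 * (1 - r) ^ 4) := by
    field_simp
    ring
  rw [this]
  have : -(3 * r ^ 2 - 8 * r + 2) / (2 * (1 - r) ^ 4) < 0 :=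
    div_neg_of_neg_of_pos (by linarith) (by positivity)
  linarith

/-- The `n`-th Taylor coefficient of `f(z) g(z) / z²`, where `a` and `b` are the coefficient
sequences of `f` and `g`, both vanishing at index `0`. -/
def cauchyCoeff (a b : ℕ → ℂ) (n : ℕ) : ℂ :=
  ∑ p ∈ Finset.HasAntidiagonal.antidiagonal n, a (p.1 + 1) * b (p.2 + 1)

lemma norm_cauchyCoeff_le {a b : ℕ → ℂ} (ha1 : a 1 = 1) (hb1 : b 1 = 1)
    (hA : ∀ n : ℕ, 2 ≤ n → ‖a n‖ ≤ ((n : ℝ) + 1) / 2)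
    (hB : ∀ n : ℕ, 2 ≤ n → ‖b n‖ ≤ 1) (n : ℕ) :
    ‖cauchyCoeff a b n‖ ≤ ((n : ℝ) + 1) * (n + 4) / 4 := by
  have hA' (k : ℕ) : ‖a (k + 1)‖ ≤ ((k : ℝ) + 2) / 2 := by
    rcases k with _ | k
    · simp [ha1]
    · refine (hA (k + 1 + 1) (by omega)).trans (le_of_eq ?_)
      push_cast
      ring
  have hB' (k : ℕ) : ‖b (k + 1)‖ ≤ 1 := by
    rcases k with _ | k
    · simp [hb1]
    · exact hB _ (by omega)
  have hsum (n : ℕ) : ∑ k ∈ Finset.range (n + 1), ((k : ℝ) + 2) / 2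
      = ((n : ℝ) + 1) * (n + 4) / 4 := by
    induction n with
    | zero => norm_num
    | succ n ih =>
      rw [Finset.sum_range_succ, ih]
      push_cast
      ring
  calc ‖cauchyCoeff a b n‖
      ≤ ∑ p ∈ Finset.HasAntidiagonal.antidiagonal n, ((p.1 : ℝ) + 2) / 2 := by
        refine norm_sum_le_of_le _ fun p _ => ?_
        rw [norm_mul]
        exact (mul_le_mul (hA' _) (hB' _) (norm_nonneg _) (by positivity)).trans
          (mul_one _).le
    _ = ((n : ℝ) + 1) * (n + 4) / 4 := by
        rw [Finset.Nat.sum_antidiagonal_eq_sum_range_succ_mk]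
        exact hsum n

/-- Dividing a power series without constant term by the variable shifts its coefficients. -/
lemma hasSum_div_self {a : ℕ → ℂ} (ha0 : a 0 = 0) {w s : ℂ} (hw : w ≠ 0)
    (h : HasSum (fun n : ℕ => a n * w ^ n) s) :
    HasSum (fun n : ℕ => a (n + 1) * w ^ n) (s / w) := by
  have h' := ((hasSum_nat_add_iff' 1).2 h).div_const w
  simp only [Finset.sum_range_one, ha0, zero_mul, sub_zero] at h'
  refine hasSum_of_eq h' (fun n => ?_) rfl
  rw [pow_succ]
  field_simp

lemma hasSum_cauchyCoeff {a b : ℕ → ℂ} (ha0 : a 0 = 0) (hb0 : b 0 = 0) {w s t : ℂ} (hw : w ≠ 0)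
    (hs : HasSum (fun n : ℕ => a n * w ^ n) s) (ht : HasSum (fun n : ℕ => b n * w ^ n) t) :
    HasSum (fun n : ℕ => cauchyCoeff a b n * w ^ n) (s * t / w ^ 2) := by
  have hp := hasSum_div_self ha0 hw hs
  have hq := hasSum_div_self hb0 hw ht
  have hpn := hp.summable.norm
  have hqn := hq.summable.norm
  have e := tsum_mul_tsum_eq_tsum_sum_antidiagonal_of_summable_norm hpn hqn
  have hsm := (summable_norm_sum_mul_antidiagonal_of_summable_norm hpn hqn).of_norm.hasSum
  rw [← e, hp.tsum_eq, hq.tsum_eq] at hsm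
  refine hasSum_of_eq hsm (fun n => ?_) ?_
  · rw [cauchyCoeff, Finset.sum_mul]
    refine Finset.sum_congr rfl fun p hp => ?_
    rw [← Finset.HasAntidiagonal.mem_antidiagonal.1 hp, pow_add]
    ring
  · field_simp

theorem radius_univalence_coeff_halfNplusOne_one
    (f g F : ℂ → ℂ) (a b : ℕ → ℂ)
    (hfa : AnalyticOnNhd ℂ f (Metric.ball (0:ℂ) 1))
    (hga : AnalyticOnNhd ℂ g (Metric.ball (0:ℂ) 1))
    (ha0 : a 0 = 0) (ha1 : a 1 = 1) (hb0 : b 0 = 0) (hb1 : b 1 = 1)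
    (hf : ∀ z ∈ Metric.ball (0:ℂ) 1, HasSum (fun n : ℕ => a n * z ^ n) (f z))
    (hg : ∀ z ∈ Metric.ball (0:ℂ) 1, HasSum (fun n : ℕ => b n * z ^ n) (g z))
    (hfne : ∀ z : ℂ, 0 < ‖z‖ → ‖z‖ < 1 → f z ≠ 0)
    (hgne : ∀ z : ℂ, 0 < ‖z‖ → ‖z‖ < 1 → g z ≠ 0)
    (hA : ∀ n : ℕ, 2 ≤ n → ‖a n‖ ≤ ((n : ℝ) + 1) / 2)
    (hB : ∀ n : ℕ, 2 ≤ n → ‖b n‖ ≤ 1)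
    (hF : ∀ z : ℂ, F z = z ^ 3 / (f z * g z)) :
    ∀ z : ℂ, 0 < ‖z‖ → ‖z‖ < (4 - Real.sqrt 10) / 3 →
      ‖deriv F z * (z / F z) ^ 2 - 1‖ < 1 := by
  intro z hz0 hzr
  have hs1 : 1 < Real.sqrt 10 := by
    rw [Real.lt_sqrt] <;> norm_num
  have hz1 : ‖z‖ < 1 := by linarith
  have hzne : z ≠ 0 := norm_pos_iff.1 hz0
  -- On the disk of radius `R < 1` the series of `h` has a summable majorant, which justifies
  -- termwise differentiation at `z`.
  obtain ⟨R, hzR, hR1⟩ := exists_between hz1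
  have hR0 : 0 ≤ R := hz0.le.trans hzR.le
  set c := cauchyCoeff a b with hc
  have hcb : ∀ n, ‖c n‖ ≤ ((n : ℝ) + 1) * (n + 4) / 4 := norm_cauchyCoeff_le ha1 hb1 hA hB
  have hcsum (w : ℂ) (h0 : w ≠ 0) (h1 : ‖w‖ < 1) :
      HasSum (fun n => c n * w ^ n) (f w * g w / w ^ 2) :=
    hasSum_cauchyCoeff ha0 hb0 h0 (hf w (by simpa using h1)) (hg w (by simpa using h1))
  set h : ℂ → ℂ := fun w => ∑' n, c n * w ^ n with hh
  have hzmem : z ∈ Metric.ball (0 : ℂ) R := by simpa using hzR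
  have hdiff : ∀ n : ℕ, DifferentiableOn ℂ (fun w : ℂ => c n * w ^ n) (Metric.ball 0 R) :=
    fun n => by fun_prop
  have hle : ∀ (n : ℕ) (w : ℂ), w ∈ Metric.ball (0 : ℂ) R →
      ‖c n * w ^ n‖ ≤ ((n : ℝ) + 1) * (n + 4) / 4 * R ^ n := by
    intro n w hw
    rw [norm_mul, norm_pow]
    have : ‖w‖ ≤ R := by simpa using (Metric.mem_ball.1 hw).le
    gcongr
    exact hcb n
  have hu := summable_coeffBound hR0 hR1
  have hdh : DifferentiableAt ℂ h z :=
    (Complex.differentiableOn_tsum_of_summable_norm hu hdiff Metric.isOpen_ball hle).differentiableAt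
      (Metric.isOpen_ball.mem_nhds hzmem)
  have hderiv : HasSum (fun n => deriv (fun w : ℂ => c n * w ^ n) z) (deriv h z) :=
    Complex.hasSum_deriv_of_summable_norm hu hdiff Metric.isOpen_ball hle hzmem
  have hhz : HasSum (fun n => c n * z ^ n) (h z) := (hcsum z hzne hz1).summable.hasSum
  have hheq (w : ℂ) (h0 : w ≠ 0) (h1 : ‖w‖ < 1) : F w = w / h w := by
    have e : h w = f w * g w / w ^ 2 := (hcsum w h0 h1).tsum_eq
    have := hfne w (norm_pos_iff.2 h0) h1
    have := hgne w (norm_pos_iff.2 h0) h1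
    rw [hF, e]
    field_simp
  have hhne : h z ≠ 0 := by
    rw [show h z = f z * g z / z ^ 2 from (hcsum z hzne hz1).tsum_eq]
    exact div_ne_zero (mul_ne_zero (hfne z hz0 hz1) (hgne z hz0 hz1)) (pow_ne_zero _ hzne)
  have hev : F =ᶠ[nhds z] fun w => w / h w := by
    filter_upwards [isOpen_ne.mem_nhds hzne,
      Metric.isOpen_ball.mem_nhds (show z ∈ Metric.ball (0 : ℂ) 1 by simpa using hz1)] with w h0 h1
    exact hheq w h0 (by simpa using h1)
  have hU : deriv F z * (z / F z) ^ 2 - 1 = h z - z * deriv h z - 1 := by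
    rw [hev.deriv_eq, ((hasDerivAt_id' z).fun_div hdh.hasDerivAt hhne).deriv, hheq z hzne hz1]
    field_simp
  have hc0 : c 0 = 1 := by simp [hc, cauchyCoeff, ha1, hb1]
  -- The constant term of `h - z h'` is `c 0 = 1`, which cancels the `- 1`.
  have hsum := (hasSum_nat_add_iff' 1).2 (hhz.sub (hderiv.mul_left z))
  have hsum' : HasSum (fun n : ℕ => -((n : ℂ) * c (n + 1) * z ^ (n + 1)))
      (h z - z * deriv h z - 1) := by
    refine hasSum_of_eq hsum (fun n => ?_) ?_
    · simp
      ring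
    · simp [hc0]
  have hmaj := hasSum_majorant hz0.le hz1
  rw [hU]
  refine lt_of_le_of_lt ?_ (majorant_lt_one hzr)
  rw [← hsum'.tsum_eq]
  refine tsum_of_norm_bounded hmaj fun n => ?_
  rw [norm_neg, norm_mul, norm_mul, norm_pow, Complex.norm_natCast]
  have := hcb (n + 1)
  gcongr
  refine this.trans (le_of_eq ?_)
  push_cast
  ring
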